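/- arXiv:2605.11933 — 2 statements merged into one kernel-verified Lean document; each statement's English description precedes it below -/
import Mathlib

section
/- Let n ≥ 3 and 2 ≤ q ≤ 2n/(n−2). There exists a constant C = C(n,q) > 0 such that for every f ∈ H^1(K) one has f ∈ L^q(K) and ‖f‖_{L^q(K)} ≤ C ‖f‖_{H^1(K)}. -/
/-!
Put `b = a / 2` and `g = exp (b |y|²) f`, which turns the norm of `L²(exp (a |y|²))` into that of
plain `L²`. Expanding `exp (b |y|²) ∇f = ∇g - 2 b g y` gives
`exp (a |y|²) |∇f|² = |∇g|² - 2 b ∇(g²) · y + 4 b² g² |y|²`. The last term is nonnegative, and so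
is the integral of the middle one, since `∫ ∇(g²) · y = -n ∫ g²`. Hence `‖∇g‖₂` is at most the
weighted norm of `∇f`, and the Gagliardo-Nirenberg-Sobolev inequality for `g` together with
interpolation between `L²` and `L^{2n/(n-2)}` bounds `‖g‖_q`. As `q ≥ 2`, the norm of `f` in
`L^q(exp (a |y|²))`, which is `‖exp (a |y|² / q) f‖_q`, is at most `‖g‖_q`.

Two approximations are needed: `f` need not have compact support, so it is multiplied by cutoff
functions, and it is only assumed differentiable, so the Sobolev inequality for `C¹` functions is
extended by mollification. Both limits are taken with Fatou's lemma.
-/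

open MeasureTheory

noncomputable section

/-- The Gaussian weight `K(y) = exp(|y|²/4)`. -/
def Kw {n : ℕ} (y : EuclideanSpace ℝ (Fin n)) : ℝ := Real.exp (‖y‖ ^ 2 / 4)

/-- Membership in the weighted Sobolev space `H¹(K)`:
`f ∈ L²(K)` and `∇f ∈ L²(K)`. -/
def MemH1K {n : ℕ} (f : EuclideanSpace ℝ (Fin n) → ℝ) : Prop :=
  Differentiable ℝ f ∧
  Integrable (fun y => (f y) ^ 2 * Kw y) ∧
  Integrable (fun y => ‖gradient f y‖ ^ 2 * Kw y)

open Module Set Filter Topology ContinuousLinearMap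
open scoped ENNReal NNReal Convolution

section LConvolution

variable {G : Type*} [AddGroup G] [MeasurableSpace G] [MeasurableAdd₂ G] [MeasurableNeg G]
  {μ : Measure G}

theorem lconvolution_rpow_le {φ f : G → ℝ≥0∞} (hφ : Measurable φ) (hf : Measurable f) {p : ℝ}
    (hp : 1 ≤ p) (x : G) :
    (φ ⋆ₗ[μ] f) x ^ p ≤ (∫⁻ y, φ y ∂μ) ^ (p - 1) * (φ ⋆ₗ[μ] fun y => f y ^ p) x := by
  have hp0 : 0 < p := zero_lt_one.trans_le hp
  have hp1 : 0 ≤ 1 - p⁻¹ := sub_nonneg.2 (inv_le_one_of_one_le₀ hp)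
  have hsplit (y : G) :
      φ y * f (-y + x) = (φ y * f (-y + x) ^ p) ^ p⁻¹ * φ y ^ (1 - p⁻¹) := by
    rw [ENNReal.mul_rpow_of_nonneg _ _ (by positivity), ENNReal.rpow_rpow_inv hp0.ne',
      mul_right_comm, ← ENNReal.rpow_add_of_nonneg _ _ (by positivity) hp1, add_sub_cancel,
      ENNReal.rpow_one]
  have hHolder : (φ ⋆ₗ[μ] f) x
      ≤ (φ ⋆ₗ[μ] fun y => f y ^ p) x ^ p⁻¹ * (∫⁻ y, φ y ∂μ) ^ (1 - p⁻¹) := by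
    simp only [lconvolution_def, hsplit]
    exact ENNReal.lintegral_mul_norm_pow_le (by fun_prop) (by fun_prop) (by positivity) hp1
      (add_sub_cancel _ _)
  calc (φ ⋆ₗ[μ] f) x ^ p
      ≤ ((φ ⋆ₗ[μ] fun y => f y ^ p) x ^ p⁻¹ * (∫⁻ y, φ y ∂μ) ^ (1 - p⁻¹)) ^ p := by gcongr
    _ = (∫⁻ y, φ y ∂μ) ^ (p - 1) * (φ ⋆ₗ[μ] fun y => f y ^ p) x := by
      rw [ENNReal.mul_rpow_of_nonneg _ _ hp0.le, ENNReal.rpow_inv_rpow hp0.ne', ← ENNReal.rpow_mul,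
        one_sub_mul, inv_mul_cancel₀ hp0.ne', mul_comm]

theorem lintegral_lconvolution [SFinite μ] [μ.IsAddLeftInvariant] {φ f : G → ℝ≥0∞}
    (hφ : Measurable φ) (hf : Measurable f) :
    ∫⁻ x, (φ ⋆ₗ[μ] f) x ∂μ = (∫⁻ y, φ y ∂μ) * ∫⁻ x, f x ∂μ := by
  simp only [lconvolution_def]
  rw [lintegral_lintegral_swap (by fun_prop), ← lintegral_mul_const _ hφ]
  refine lintegral_congr fun y => ?_
  rw [lintegral_const_mul _ (by fun_prop), lintegral_add_left_eq_self f]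

theorem lintegral_lconvolution_rpow_le [SFinite μ] [μ.IsAddLeftInvariant] {φ f : G → ℝ≥0∞}
    (hφ : Measurable φ) (hf : Measurable f) {p : ℝ} (hp : 1 ≤ p) :
    ∫⁻ x, (φ ⋆ₗ[μ] f) x ^ p ∂μ ≤ (∫⁻ y, φ y ∂μ) ^ p * ∫⁻ x, f x ^ p ∂μ :=
  calc ∫⁻ x, (φ ⋆ₗ[μ] f) x ^ p ∂μ
      ≤ ∫⁻ x, (∫⁻ y, φ y ∂μ) ^ (p - 1) * (φ ⋆ₗ[μ] fun y => f y ^ p) x ∂μ :=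
        lintegral_mono fun x => lconvolution_rpow_le hφ hf hp x
    _ = (∫⁻ y, φ y ∂μ) ^ (p - 1) * ((∫⁻ y, φ y ∂μ) * ∫⁻ x, f x ^ p ∂μ) := by
        rw [lintegral_const_mul _ (by fun_prop), lintegral_lconvolution hφ (hf.pow_const p)]
    _ = (∫⁻ y, φ y ∂μ) ^ p * ∫⁻ x, f x ^ p ∂μ := by
        have hpow :=
          ENNReal.rpow_add_of_nonneg (x := ∫⁻ y, φ y ∂μ) _ _ (sub_nonneg.2 hp) zero_le_one
        rw [sub_add_cancel, ENNReal.rpow_one] at hpow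
        rw [hpow, mul_assoc]

end LConvolution

section Convolution

variable {G F : Type*} [AddCommGroup G] [MeasurableSpace G] [MeasurableAdd₂ G] [MeasurableNeg G]
  {μ : Measure G} [SFinite μ] [μ.IsAddLeftInvariant] [NormedAddCommGroup F] [NormedSpace ℝ F]
  [MeasurableSpace F] [OpensMeasurableSpace F]

theorem eLpNorm_convolution_lsmul_le {φ : G → ℝ} {f : G → F} (hφ : Measurable φ)
    (hf : Measurable f) {p : ℝ≥0} (hp : 1 ≤ p) :
    eLpNorm (φ ⋆[lsmul ℝ ℝ, μ] f) p μ ≤ eLpNorm φ 1 μ * eLpNorm f p μ := by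
  have hp0 : 0 < (p : ℝ) := by exact_mod_cast zero_lt_one.trans_le hp
  have hpt (x : G) : ‖(φ ⋆[lsmul ℝ ℝ, μ] f) x‖ₑ ≤ ((‖φ ·‖ₑ) ⋆ₗ[μ] (‖f ·‖ₑ)) x := by
    refine (enorm_integral_le_lintegral_enorm _).trans_eq (lintegral_congr fun y => ?_)
    rw [lsmul_apply, enorm_smul, sub_eq_neg_add]
  rw [← ENNReal.rpow_le_rpow_iff hp0, ENNReal.mul_rpow_of_nonneg _ _ hp0.le,
    eLpNorm_one_eq_lintegral_enorm, eLpNorm_nnreal_pow_eq_lintegral (by exact_mod_cast hp0.ne'),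
    eLpNorm_nnreal_pow_eq_lintegral (by exact_mod_cast hp0.ne')]
  exact (lintegral_mono fun x => ENNReal.rpow_le_rpow (hpt x) hp0.le).trans
    (lintegral_lconvolution_rpow_le hφ.enorm hf.enorm (by exact_mod_cast hp))

end Convolution

section LpNorm

variable {α F : Type*} [MeasurableSpace α] {μ : Measure α} [NormedAddCommGroup F]

theorem eLpNorm_le_max_eLpNorm {f : α → F} (hf : AEStronglyMeasurable f μ) {p₀ p p₁ : ℝ≥0}
    (hp₀ : 0 < p₀) (hp : p ∈ Icc p₀ p₁) :
    eLpNorm f p μ ≤ max (eLpNorm f p₀ μ) (eLpNorm f p₁ μ) := by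
  obtain ⟨s, t, hs, ht, hst, hpst⟩ : (p : ℝ) ∈ segment ℝ (p₀ : ℝ) p₁ := by
    rw [segment_eq_Icc (by exact_mod_cast hp.1.trans hp.2)]
    exact_mod_cast hp
  have hp_pos : 0 < p := hp₀.trans_le hp.1
  have hp₁ : 0 < p₁ := hp_pos.trans_le hp.2
  set M := max (eLpNorm f p₀ μ) (eLpNorm f p₁ μ)
  have hsplit (x : α) :
      ‖f x‖ₑ ^ (p : ℝ) = (‖f x‖ₑ ^ (p₀ : ℝ)) ^ s * (‖f x‖ₑ ^ (p₁ : ℝ)) ^ t := by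
    rw [← ENNReal.rpow_mul, ← ENNReal.rpow_mul, ← ENNReal.rpow_add_of_nonneg _ _ (by positivity)
      (by positivity), ← hpst, smul_eq_mul, smul_eq_mul, mul_comm s, mul_comm t]
  have hpow {r : ℝ≥0} (hr : 0 < r) (hM : eLpNorm f r μ ≤ M) :
      ∫⁻ x, ‖f x‖ₑ ^ (r : ℝ) ∂μ ≤ M ^ (r : ℝ) := by
    rw [← eLpNorm_nnreal_pow_eq_lintegral hr.ne']
    gcongr
  rw [← ENNReal.rpow_le_rpow_iff (by exact_mod_cast hp_pos : 0 < (p : ℝ)),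
    eLpNorm_nnreal_pow_eq_lintegral hp_pos.ne']
  calc ∫⁻ x, ‖f x‖ₑ ^ (p : ℝ) ∂μ
      ≤ (∫⁻ x, ‖f x‖ₑ ^ (p₀ : ℝ) ∂μ) ^ s * (∫⁻ x, ‖f x‖ₑ ^ (p₁ : ℝ) ∂μ) ^ t := by
        simp only [hsplit]
        exact ENNReal.lintegral_mul_norm_pow_le (hf.enorm.pow_const _) (hf.enorm.pow_const _)
          hs ht hst
    _ ≤ (M ^ (p₀ : ℝ)) ^ s * (M ^ (p₁ : ℝ)) ^ t := by
        gcongr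
        · exact hpow hp₀ (le_max_left _ _)
        · exact hpow hp₁ (le_max_right _ _)
    _ = M ^ (p : ℝ) := by
        rw [← ENNReal.rpow_mul, ← ENNReal.rpow_mul, ← ENNReal.rpow_add_of_nonneg _ _
          (by positivity) (by positivity), ← hpst, smul_eq_mul, smul_eq_mul, mul_comm s,
          mul_comm t]

theorem eLpNorm_le_of_tendsto {p : ℝ≥0∞} {f : ℕ → α → F} {g : α → F} {c : ℕ → ℝ≥0∞}
    {C : ℝ≥0∞} (hf : ∀ k, AEStronglyMeasurable (f k) μ)
    (hfg : ∀ᵐ x ∂μ, Tendsto (fun k => f k x) atTop (𝓝 (g x))) (hc : Tendsto c atTop (𝓝 C))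
    (hfc : ∀ k, eLpNorm (f k) p μ ≤ c k) : eLpNorm g p μ ≤ C :=
  calc eLpNorm g p μ
      ≤ liminf (fun k => eLpNorm (f k) p μ) atTop := Lp.eLpNorm_lim_le_liminf_eLpNorm hf g hfg
    _ ≤ liminf c atTop := liminf_le_liminf (.of_forall hfc)
    _ = C := hc.liminf_eq

end LpNorm

section Sobolev

variable {E : Type*} [NormedAddCommGroup E] [NormedSpace ℝ E] [FiniteDimensional ℝ E]
  [MeasurableSpace E] [BorelSpace E] {μ : Measure E} [μ.IsAddHaarMeasure]

theorem fderiv_convolution_lsmul_eq {F : Type*} [NormedAddCommGroup F] [NormedSpace ℝ F]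
    {φ : E → ℝ} {u : E → F} (hφ : ContDiff ℝ 1 φ) (hφc : HasCompactSupport φ)
    (hu : Differentiable ℝ u) (hu' : LocallyIntegrable (fderiv ℝ u) μ) :
    fderiv ℝ (φ ⋆[lsmul ℝ ℝ, μ] u) = φ ⋆[lsmul ℝ ℝ, μ] fderiv ℝ u := by
  have hu_loc : LocallyIntegrable u μ := hu.continuous.locallyIntegrable
  ext x v
  have hreflect (t : E) : fderiv ℝ (fun t => u (x - t)) t v = -fderiv ℝ u (x - t) v := by
    have h : HasFDerivAt (fun t => u (x - t)) _ t :=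
      (hu (x - t)).hasFDerivAt.comp t ((hasFDerivAt_id t).const_sub x)
    simpa using DFunLike.congr_fun h.fderiv v
  have hφ'u : Integrable (fun t => (lsmul ℝ ℝ).precompL E (fderiv ℝ φ t) (u (x - t))) μ :=
    (hφc.fderiv ℝ).convolutionExists_left _ (hφ.continuous_fderiv one_ne_zero) hu_loc x
  have hφu' : Integrable (fun t => φ t • fderiv ℝ u (x - t)) μ :=
    hφc.convolutionExists_left (lsmul ℝ ℝ) hφ.continuous hu' x
  have hφu : Integrable (fun t => φ t • u (x - t)) μ :=
    hφc.convolutionExists_left (lsmul ℝ ℝ) hφ.continuous hu_loc x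
  calc fderiv ℝ (φ ⋆[lsmul ℝ ℝ, μ] u) x v
      = (∫ t, (lsmul ℝ ℝ).precompL E (fderiv ℝ φ t) (u (x - t)) ∂μ) v := by
        rw [(hφc.hasFDerivAt_convolution_left (lsmul ℝ ℝ) hφ hu_loc x).fderiv, convolution_def]
    _ = ∫ t, fderiv ℝ φ t v • u (x - t) ∂μ := integral_apply hφ'u v
    _ = ∫ t, φ t • fderiv ℝ u (x - t) v ∂μ := by
        have h := integral_smul_fderiv_eq_neg_fderiv_smul_of_integrable (μ := μ) (f := φ)
          (g := fun t => u (x - t)) (v := v) (hφ'u.apply_continuousLinearMap v)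
          (by simpa [hreflect] using (hφu'.apply_continuousLinearMap v).neg) hφu
          (fun t _ => hφ.differentiable one_ne_zero t)
          (fun t _ => (hu.comp (differentiable_const x |>.sub differentiable_id)) t)
        simpa [hreflect, integral_neg] using h.symm
    _ = (φ ⋆[lsmul ℝ ℝ, μ] fderiv ℝ u) x v := (integral_apply hφu' v).symm

theorem eLpNorm_le_eLpNorm_fderiv_of_differentiable {F : Type*} [NormedAddCommGroup F]
    [InnerProductSpace ℝ F] [CompleteSpace F] {u : E → F} (hu : Differentiable ℝ u)
    (huc : HasCompactSupport u) {p p' : ℝ≥0} (hp : 1 ≤ p) (hE : 0 < finrank ℝ E)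
    (hp' : (p' : ℝ)⁻¹ = (p : ℝ)⁻¹ - (finrank ℝ E : ℝ)⁻¹) (hu' : MemLp (fderiv ℝ u) p μ) :
    eLpNorm u p' μ ≤ eLpNormLESNormFDerivOfEqInnerConst μ p * eLpNorm (fderiv ℝ u) p μ := by
  let φ (k : ℕ) : ContDiffBump (0 : E) :=
    ⟨(k + 2 : ℝ)⁻¹, (k + 1 : ℝ)⁻¹, by positivity, by gcongr; norm_num⟩
  have hφ : Tendsto (fun k => (φ k).rOut) atTop (𝓝 0) := by
    simpa [φ] using tendsto_one_div_add_atTop_nhds_zero_nat (𝕜 := ℝ)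
  let uφ (k : ℕ) : E → F := (φ k).normed μ ⋆[lsmul ℝ ℝ, μ] u
  have huφ (k : ℕ) : ContDiff ℝ 1 (uφ k) :=
    (φ k).hasCompactSupport_normed.contDiff_convolution_left _ (φ k).contDiff_normed
      hu.continuous.locallyIntegrable
  have hfderiv (k : ℕ) : eLpNorm (fderiv ℝ (uφ k)) p μ ≤ eLpNorm (fderiv ℝ u) p μ := by
    have hmass : eLpNorm ((φ k).normed μ) 1 μ = 1 := by
      rw [eLpNorm_one_eq_lintegral_enorm,
        ← ofReal_integral_norm_eq_lintegral_enorm (φ k).integrable_normed]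
      simp only [Real.norm_of_nonneg ((φ k).nonneg_normed _), (φ k).integral_normed,
        ENNReal.ofReal_one]
    rw [fderiv_convolution_lsmul_eq (φ k).contDiff_normed (φ k).hasCompactSupport_normed hu
      (hu'.locallyIntegrable (by exact_mod_cast hp))]
    refine (eLpNorm_convolution_lsmul_le (φ k).continuous_normed.measurable
      (measurable_fderiv ℝ u) hp).trans_eq ?_
    rw [hmass, one_mul]
  refine eLpNorm_le_of_tendsto (fun k => (huφ k).continuous.aestronglyMeasurable)
    (.of_forall fun x =>
      ContDiffBump.convolution_tendsto_right_of_continuous hφ hu.continuous x)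
    tendsto_const_nhds fun k => ?_
  refine (eLpNorm_le_eLpNorm_fderiv_of_eq_inner μ (huφ k)
    ((φ k).hasCompactSupport_normed.convolution _ huc) hp hE hp').trans ?_
  gcongr
  exact hfderiv k

end Sobolev

theorem integrable_smul_of_hasCompactSupport {X F : Type*} [TopologicalSpace X] [T2Space X]
    [MeasurableSpace X] [OpensMeasurableSpace X] {μ : Measure X} [NormedAddCommGroup F]
    [NormedSpace ℝ F] {c : X → ℝ} {f : X → F} (hc : Continuous c) (hf : LocallyIntegrable f μ)
    (hfc : HasCompactSupport f) : Integrable (fun y => c y • f y) μ :=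
  (integrableOn_iff_integrable_of_support_subset <|
    (Function.support_smul_subset_right c f).trans (subset_tsupport f)).1 <|
    (hf.integrableOn_isCompact hfc).continuousOn_smul hc.continuousOn hfc

section EulerField

variable {E : Type*} [NormedAddCommGroup E] [NormedSpace ℝ E] [FiniteDimensional ℝ E]
  [MeasurableSpace E] [BorelSpace E] {μ : Measure E}

theorem integrable_fderiv_apply_self {w : E → ℝ} (hwc : HasCompactSupport w)
    (hw' : LocallyIntegrable (fderiv ℝ w) μ) : Integrable (fun y => fderiv ℝ w y y) μ := by
  refine (integrable_smul_of_hasCompactSupport continuous_norm hw' (hwc.fderiv ℝ)).mono ?_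
    (.of_forall fun y => ?_)
  · exact (ContinuousLinearMap.id ℝ (E →L[ℝ] ℝ)).aestronglyMeasurable_comp₂
      hw'.aestronglyMeasurable aestronglyMeasurable_id
  · rw [norm_smul, norm_norm, mul_comm]
    exact (fderiv ℝ w y).le_opNorm y

theorem integral_fderiv_apply_self [μ.IsAddHaarMeasure] {w : E → ℝ} (hw : Differentiable ℝ w)
    (hwc : HasCompactSupport w) (hw' : LocallyIntegrable (fderiv ℝ w) μ) :
    ∫ y, fderiv ℝ w y y ∂μ = -(finrank ℝ E * ∫ y, w y ∂μ) := by
  let b := finBasis ℝ E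
  let c (i : Fin (finrank ℝ E)) : E →L[ℝ] ℝ := LinearMap.toContinuousLinearMap (b.coord i)
  have hsum (y : E) : fderiv ℝ w y y = ∑ i, c i y * fderiv ℝ w y (b i) := by
    conv_lhs => rw [← b.sum_repr y, map_sum]
    simp [c]
  have hint (i : Fin (finrank ℝ E)) : Integrable (fun y => c i y * fderiv ℝ w y (b i)) μ :=
    (integrable_smul_of_hasCompactSupport (c i).continuous hw'
      (hwc.fderiv ℝ)).apply_continuousLinearMap (b i)
  have hcoord (i : Fin (finrank ℝ E)) :
      ∫ y, c i y * fderiv ℝ w y (b i) ∂μ = -∫ y, w y ∂μ := by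
    have hw_int {a : E → ℝ} (ha : Continuous a) : Integrable (fun y => a y * w y) μ :=
      (ha.mul hw.continuous).integrable_of_hasCompactSupport hwc.mul_left
    have hc (y : E) : fderiv ℝ (c i) y (b i) = 1 := by
      rw [(c i).fderiv]; simp [c]
    rw [integral_mul_fderiv_eq_neg_fderiv_mul_of_integrable
      (by simpa [hc] using hw_int continuous_const) (hint i) (hw_int (c i).continuous)
      (fun y _ => (c i).differentiableAt) (fun y _ => hw y)]
    simp only [hc, one_mul]
  simp only [hsum]
  rw [integral_finsetSum _ fun i _ => hint i]
  simp [hcoord]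

end EulerField

section Gaussian

variable {E : Type*} [NormedAddCommGroup E]

/-- The Gaussian weight `exp (b * ‖y‖ ^ 2)`. The rate `b` is a parameter because `L^q` with weight
`gaussianWeight a` is plain `L^q` after multiplication by `gaussianWeight (a / q)`. -/
def gaussianWeight (b : ℝ) (y : E) : ℝ := Real.exp (b * ‖y‖ ^ 2)

theorem gaussianWeight_pos (b : ℝ) (y : E) : 0 < gaussianWeight b y := Real.exp_pos _

theorem gaussianWeight_le_gaussianWeight {b c : ℝ} (hbc : b ≤ c) (y : E) :
    gaussianWeight b y ≤ gaussianWeight c y := by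
  unfold gaussianWeight
  gcongr

theorem gaussianWeight_div_rpow (a : ℝ) {r : ℝ} (hr : r ≠ 0) (y : E) :
    gaussianWeight (a / r) y ^ r = gaussianWeight a y := by
  rw [gaussianWeight, gaussianWeight, ← Real.exp_mul]
  field_simp

theorem norm_gaussianWeight_smul {F : Type*} [NormedAddCommGroup F] [NormedSpace ℝ F] (b : ℝ)
    (y : E) (v : F) : ‖gaussianWeight b y • v‖ = gaussianWeight b y * ‖v‖ := by
  rw [norm_smul, Real.norm_of_nonneg (gaussianWeight_pos b y).le]

theorem continuous_gaussianWeight (b : ℝ) : Continuous (gaussianWeight b : E → ℝ) := by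
  unfold gaussianWeight
  fun_prop

variable [InnerProductSpace ℝ E]

theorem hasFDerivAt_gaussianWeight (b : ℝ) (y : E) :
    HasFDerivAt (gaussianWeight b) ((2 * b * gaussianWeight b y) • innerSL ℝ y) y := by
  refine ((hasStrictFDerivAt_norm_sq y).hasFDerivAt.const_mul b).exp.congr_fderiv ?_
  rw [gaussianWeight, ← Nat.cast_smul_eq_nsmul ℝ, smul_smul, smul_smul, Nat.cast_ofNat]
  congr 1
  ring

theorem hasFDerivAt_gaussianWeight_mul {b : ℝ} {u : E → ℝ} {u' : E →L[ℝ] ℝ} {y : E}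
    (hu : HasFDerivAt u u' y) :
    HasFDerivAt (fun y => gaussianWeight b y * u y)
      (gaussianWeight b y • u' + (2 * b * (gaussianWeight b y * u y)) • innerSL ℝ y) y := by
  refine ((hasFDerivAt_gaussianWeight b y).mul hu).congr_fderiv ?_
  rw [smul_smul]
  congr 2
  ring

theorem differentiable_gaussianWeight_mul (b : ℝ) {u : E → ℝ} (hu : Differentiable ℝ u) :
    Differentiable ℝ fun y => gaussianWeight b y * u y :=
  fun y => (hasFDerivAt_gaussianWeight_mul (hu y).hasFDerivAt).differentiableAt

theorem fderiv_gaussianWeight_mul (b : ℝ) {u : E → ℝ} (hu : Differentiable ℝ u) (y : E) :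
    fderiv ℝ (fun y => gaussianWeight b y * u y) y =
      gaussianWeight b y • fderiv ℝ u y + (2 * b * (gaussianWeight b y * u y)) • innerSL ℝ y :=
  (hasFDerivAt_gaussianWeight_mul (hu y).hasFDerivAt).fderiv

theorem norm_sub_smul_innerSL_sq [CompleteSpace E] (L : E →L[ℝ] ℝ) (c : ℝ) (y : E) :
    ‖L - c • innerSL ℝ y‖ ^ 2 = ‖L‖ ^ 2 - 2 * c * L y + c ^ 2 * ‖y‖ ^ 2 := by
  obtain ⟨v, rfl⟩ := (InnerProductSpace.toDual ℝ E).surjective L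
  have hv : InnerProductSpace.toDual ℝ E v - c • innerSL ℝ y =
      InnerProductSpace.toDual ℝ E (v - c • y) := by
    ext z
    simp
  rw [hv, LinearIsometryEquiv.norm_map, LinearIsometryEquiv.norm_map, norm_sub_sq_real,
    InnerProductSpace.toDual_apply_apply, inner_smul_right, norm_smul, mul_pow,
    Real.norm_eq_abs, sq_abs]
  ring

theorem norm_fderiv_gaussianWeight_mul_sq_le [CompleteSpace E] (b : ℝ) {u : E → ℝ}
    (hu : Differentiable ℝ u) (y : E) :
    ‖fderiv ℝ (fun y => gaussianWeight b y * u y) y‖ ^ 2 ≤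
      ‖gaussianWeight b y • fderiv ℝ u y‖ ^ 2 +
        2 * b * fderiv ℝ (fun y => (gaussianWeight b y * u y) ^ 2) y y := by
  set g : E → ℝ := fun y => gaussianWeight b y * u y
  have hg : Differentiable ℝ g := differentiable_gaussianWeight_mul b hu
  have hWu : gaussianWeight b y • fderiv ℝ u y = fderiv ℝ g y - (2 * b * g y) • innerSL ℝ y :=
    eq_sub_of_add_eq (fderiv_gaussianWeight_mul b hu y).symm
  have hgsq : fderiv ℝ (fun y => g y ^ 2) y y = 2 * g y * fderiv ℝ g y y := by
    rw [fderiv_fun_pow 2 (hg y)]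
    simp
  have hdrop : 0 ≤ (2 * b * g y) ^ 2 * ‖y‖ ^ 2 := by positivity
  rw [hWu, norm_sub_smul_innerSL_sq, hgsq]
  linarith

variable [MeasurableSpace E] [BorelSpace E] {μ : Measure E}

theorem memLp_fderiv_gaussianWeight_mul [IsFiniteMeasureOnCompacts μ] {b : ℝ} {u : E → ℝ}
    (hu : Differentiable ℝ u) (huc : HasCompactSupport u) {p : ℝ≥0∞}
    (hWu' : MemLp (fun y => gaussianWeight b y • fderiv ℝ u y) p μ) :
    MemLp (fderiv ℝ fun y => gaussianWeight b y * u y) p μ := by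
  let drift (y : E) : E →L[ℝ] ℝ := (2 * b * (gaussianWeight b y * u y)) • innerSL ℝ y
  have hdrift_cont : Continuous drift := by
    have hW := (continuous_gaussianWeight b).mul hu.continuous
    exact (hW.const_mul (2 * b)).smul (innerSL ℝ).continuous
  have hdrift : HasCompactSupport drift := huc.mono fun y hy hu0 => hy (by simp [drift, hu0])
  have hfderiv : (fderiv ℝ fun y => gaussianWeight b y * u y) =
      (fun y => gaussianWeight b y • fderiv ℝ u y) + drift :=
    funext (fderiv_gaussianWeight_mul b hu)
  rw [hfderiv]
  exact MemLp.add (ε := E →L[ℝ] ℝ) hWu' (hdrift_cont.memLp_of_hasCompactSupport hdrift)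

variable [FiniteDimensional ℝ E] [μ.IsAddHaarMeasure]

theorem integral_norm_fderiv_gaussianWeight_mul_sq_le {b : ℝ} (hb : 0 ≤ b) {u : E → ℝ}
    (hu : Differentiable ℝ u) (huc : HasCompactSupport u)
    (hWu' : MemLp (fun y => gaussianWeight b y • fderiv ℝ u y) 2 μ) :
    ∫ y, ‖fderiv ℝ (fun y => gaussianWeight b y * u y) y‖ ^ 2 ∂μ ≤
      ∫ y, ‖gaussianWeight b y • fderiv ℝ u y‖ ^ 2 ∂μ := by
  set g : E → ℝ := fun y => gaussianWeight b y * u y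
  have hg : Differentiable ℝ g := differentiable_gaussianWeight_mul b hu
  have hgc : HasCompactSupport g := huc.mul_left
  have hgsqc : HasCompactSupport fun y => g y ^ 2 := by
    exact hgc.mono fun y hy hg0 => hy (by simp [hg0])
  have hgsq' : LocallyIntegrable (fderiv ℝ fun y => g y ^ 2) μ := by
    have hg' : LocallyIntegrable (fderiv ℝ g) μ :=
      (memLp_fderiv_gaussianWeight_mul hu huc hWu').locallyIntegrable one_le_two
    have h : fderiv ℝ (fun y => g y ^ 2) = fun y => (2 * g y) • fderiv ℝ g y := by
      ext1 y
      simp [fderiv_fun_pow 2 (hg y)]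
    rw [h]
    exact (integrable_smul_of_hasCompactSupport (hg.continuous.const_mul 2) hg'
      (hgc.fderiv ℝ)).locallyIntegrable
  calc ∫ y, ‖fderiv ℝ g y‖ ^ 2 ∂μ
      ≤ ∫ y, (‖gaussianWeight b y • fderiv ℝ u y‖ ^ 2 +
          2 * b * fderiv ℝ (fun y => g y ^ 2) y y) ∂μ :=
        integral_mono_of_nonneg (.of_forall fun y => by positivity)
          (hWu'.integrable_norm_pow two_ne_zero |>.add
            ((integrable_fderiv_apply_self hgsqc hgsq').const_mul _))
          (.of_forall fun y => norm_fderiv_gaussianWeight_mul_sq_le b hu y)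
    _ = ∫ y, ‖gaussianWeight b y • fderiv ℝ u y‖ ^ 2 ∂μ -
          2 * b * (finrank ℝ E * ∫ y, g y ^ 2 ∂μ) := by
        rw [integral_add (hWu'.integrable_norm_pow two_ne_zero)
          ((integrable_fderiv_apply_self hgsqc hgsq').const_mul _), integral_const_mul,
          integral_fderiv_apply_self (hg.fun_pow 2) hgsqc hgsq', mul_neg, sub_eq_add_neg]
    _ ≤ ∫ y, ‖gaussianWeight b y • fderiv ℝ u y‖ ^ 2 ∂μ := by
        have hmass : 0 ≤ ∫ y, g y ^ 2 ∂μ := integral_nonneg fun y => sq_nonneg _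
        exact sub_le_self _ (mul_nonneg (by positivity) (mul_nonneg (by positivity) hmass))

theorem eLpNorm_fderiv_gaussianWeight_mul_le {b : ℝ} (hb : 0 ≤ b) {u : E → ℝ}
    (hu : Differentiable ℝ u) (huc : HasCompactSupport u)
    (hWu' : MemLp (fun y => gaussianWeight b y • fderiv ℝ u y) 2 μ) :
    eLpNorm (fderiv ℝ fun y => gaussianWeight b y * u y) 2 μ ≤
      eLpNorm (fun y => gaussianWeight b y • fderiv ℝ u y) 2 μ := by
  rw [(memLp_fderiv_gaussianWeight_mul hu huc hWu').eLpNorm_eq_integral_rpow_norm two_ne_zero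
    ENNReal.ofNat_ne_top, hWu'.eLpNorm_eq_integral_rpow_norm two_ne_zero ENNReal.ofNat_ne_top]
  simp only [ENNReal.toReal_ofNat, Real.rpow_ofNat]
  refine ENNReal.ofReal_le_ofReal (Real.rpow_le_rpow (integral_nonneg fun y => sq_nonneg _) ?_
    (by norm_num))
  exact integral_norm_fderiv_gaussianWeight_mul_sq_le hb hu huc hWu'

theorem eLpNorm_gaussianWeight_mul_le_of_hasCompactSupport {b : ℝ} (hb : 0 ≤ b) {q p : ℝ≥0}
    (hE : 0 < finrank ℝ E) (hp : (p : ℝ)⁻¹ = 2⁻¹ - (finrank ℝ E : ℝ)⁻¹) (hq : q ∈ Icc 2 p)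
    {u : E → ℝ} (hu : Differentiable ℝ u) (huc : HasCompactSupport u)
    (hWu' : MemLp (fun y => gaussianWeight b y • fderiv ℝ u y) 2 μ) :
    eLpNorm (fun y => gaussianWeight b y * u y) q μ ≤
      max (eLpNorm (fun y => gaussianWeight b y * u y) 2 μ)
        (eLpNormLESNormFDerivOfEqInnerConst μ 2 *
          eLpNorm (fun y => gaussianWeight b y • fderiv ℝ u y) 2 μ) := by
  have hWu : Differentiable ℝ fun y => gaussianWeight b y * u y :=
    differentiable_gaussianWeight_mul b hu
  refine (eLpNorm_le_max_eLpNorm hWu.continuous.aestronglyMeasurable two_pos hq).trans ?_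
  refine max_le_max le_rfl ?_
  calc eLpNorm (fun y => gaussianWeight b y * u y) p μ
      ≤ eLpNormLESNormFDerivOfEqInnerConst μ 2 *
          eLpNorm (fderiv ℝ fun y => gaussianWeight b y * u y) 2 μ :=
        eLpNorm_le_eLpNorm_fderiv_of_differentiable hWu huc.mul_left (p := 2) one_le_two hE
          hp (memLp_fderiv_gaussianWeight_mul hu huc hWu')
    _ ≤ _ := by
        gcongr
        exact eLpNorm_fderiv_gaussianWeight_mul_le hb hu huc hWu'

end Gaussian

section Cutoff

variable {E : Type*} [NormedAddCommGroup E] [NormedSpace ℝ E] [FiniteDimensional ℝ E]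

/-- A smooth cutoff function on `E` that is `1` on the ball of radius `R` and vanishes outside the
ball of radius `2 * R`, obtained by rescaling one fixed bump function. -/
def cutoff (R : ℝ) (y : E) : ℝ :=
  (⟨1, 2, one_pos, one_lt_two⟩ : ContDiffBump (0 : E)) (R⁻¹ • y)

theorem norm_cutoff_le_one (R : ℝ) (y : E) : ‖cutoff R y‖ ≤ 1 := by
  rw [cutoff, Real.norm_of_nonneg (ContDiffBump.nonneg _)]
  exact ContDiffBump.le_one _

theorem contDiff_cutoff (R : ℝ) : ContDiff ℝ 1 (cutoff R : E → ℝ) :=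
  (ContDiffBump.contDiff _).comp (contDiff_const_smul R⁻¹)

theorem hasCompactSupport_cutoff {R : ℝ} (hR : R ≠ 0) : HasCompactSupport (cutoff R : E → ℝ) :=
  HasCompactSupport.comp_smul (ContDiffBump.hasCompactSupport _) (inv_ne_zero hR)

theorem tendsto_cutoff_atTop (y : E) : Tendsto (cutoff · y) atTop (𝓝 1) := by
  let φ : ContDiffBump (0 : E) := ⟨1, 2, one_pos, one_lt_two⟩
  have hscale : Tendsto (fun R : ℝ => R⁻¹ • y) atTop (𝓝 0) := by
    simpa using (tendsto_inv_atTop_zero (𝕜 := ℝ)).smul_const y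
  have hφ : φ 0 = 1 := φ.one_of_mem_closedBall (Metric.mem_closedBall_self φ.rIn_pos.le)
  exact hφ ▸ (φ.continuous.tendsto 0).comp hscale

variable (E) in
theorem exists_norm_fderiv_cutoff_le :
    ∃ M, ∀ (R : ℝ) (y : E), ‖fderiv ℝ (cutoff R) y‖ ≤ |R|⁻¹ * M := by
  let φ : ContDiffBump (0 : E) := ⟨1, 2, one_pos, one_lt_two⟩
  obtain ⟨M, hM⟩ := (φ.hasCompactSupport.fderiv ℝ).exists_bound_of_continuous
    (φ.contDiff.continuous_fderiv one_ne_zero)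
  refine ⟨M, fun R y => ?_⟩
  have hscale : fderiv ℝ (cutoff R) y = R⁻¹ • fderiv ℝ φ (R⁻¹ • y) := fderiv_comp_smul R⁻¹
  rw [hscale, norm_smul, norm_inv, Real.norm_eq_abs]
  gcongr
  exact hM _

theorem smul_fderiv_cutoff_mul (R w : ℝ) {u : E → ℝ} (hu : Differentiable ℝ u) (y : E) :
    w • fderiv ℝ (fun y => cutoff R y * u y) y =
      cutoff R y • w • fderiv ℝ u y + (w * u y) • fderiv ℝ (cutoff R) y := by
  rw [fderiv_fun_mul ((contDiff_cutoff R).differentiable one_ne_zero y) (hu y), smul_add,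
    smul_comm, smul_smul w (u y)]

theorem norm_smul_fderiv_cutoff_le {M : ℝ}
    (hM : ∀ (R : ℝ) (y : E), ‖fderiv ℝ (cutoff R) y‖ ≤ |R|⁻¹ * M) (R c : ℝ) (y : E) :
    ‖c • fderiv ℝ (cutoff R) y‖ ≤ |R|⁻¹ * M * ‖c‖ := by
  rw [norm_smul, mul_comm]
  gcongr
  exact hM R y

variable [MeasurableSpace E] {μ : Measure E} {p : ℝ≥0∞}

theorem eLpNorm_cutoff_smul_le {F : Type*} [NormedAddCommGroup F] [NormedSpace ℝ F] (R : ℝ)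
    (g : E → F) : eLpNorm (fun y => cutoff R y • g y) p μ ≤ eLpNorm g p μ :=
  eLpNorm_mono fun y => by
    rw [norm_smul]
    exact mul_le_of_le_one_left (norm_nonneg _) (norm_cutoff_le_one R y)

variable [BorelSpace E]

theorem memLp_cutoff_smul {F : Type*} [NormedAddCommGroup F] [NormedSpace ℝ F] {g : E → F} (R : ℝ)
    (hg : MemLp g p μ) : MemLp (fun y => cutoff R y • g y) p μ :=
  hg.of_le ((contDiff_cutoff R).continuous.aestronglyMeasurable.smul hg.1) <| .of_forall fun y => by
    rw [norm_smul]
    exact mul_le_of_le_one_left (norm_nonneg _) (norm_cutoff_le_one R y)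

theorem memLp_smul_fderiv_cutoff_mul {W u : E → ℝ} (R : ℝ) (hu : Differentiable ℝ u)
    (hWu : MemLp (fun y => W y * u y) p μ) (hWu' : MemLp (fun y => W y • fderiv ℝ u y) p μ) :
    MemLp (fun y => W y • fderiv ℝ (fun y => cutoff R y * u y) y) p μ := by
  obtain ⟨M, hM⟩ := exists_norm_fderiv_cutoff_le E
  have hcont : Continuous (fderiv ℝ (cutoff R : E → ℝ)) :=
    (contDiff_cutoff R).continuous_fderiv one_ne_zero
  have h : MemLp (fun y => (W y * u y) • fderiv ℝ (cutoff R) y) p μ :=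
    hWu.of_le_mul (hWu.1.smul hcont.aestronglyMeasurable)
      (.of_forall fun y => norm_smul_fderiv_cutoff_le hM R _ y)
  simp only [smul_fderiv_cutoff_mul R _ hu]
  exact MemLp.add (ε := E →L[ℝ] ℝ) (memLp_cutoff_smul R hWu') h

theorem eLpNorm_smul_fderiv_cutoff_mul_le {M : ℝ}
    (hM : ∀ (R : ℝ) (y : E), ‖fderiv ℝ (cutoff R) y‖ ≤ |R|⁻¹ * M) {W u : E → ℝ} (R : ℝ)
    (hp : 1 ≤ p) (hu : Differentiable ℝ u)
    (hWu : MemLp (fun y => W y * u y) p μ) (hWu' : MemLp (fun y => W y • fderiv ℝ u y) p μ) :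
    eLpNorm (fun y => W y • fderiv ℝ (fun y => cutoff R y * u y) y) p μ ≤
      eLpNorm (fun y => W y • fderiv ℝ u y) p μ +
        ENNReal.ofReal (|R|⁻¹ * M) * eLpNorm (fun y => W y * u y) p μ := by
  have hcont : Continuous (fderiv ℝ (cutoff R : E → ℝ)) :=
    (contDiff_cutoff R).continuous_fderiv one_ne_zero
  simp only [smul_fderiv_cutoff_mul R _ hu]
  refine (eLpNorm_add_le (ε := E →L[ℝ] ℝ) (memLp_cutoff_smul R hWu').1
    (hWu.1.smul hcont.aestronglyMeasurable) hp).trans ?_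
  gcongr
  · exact eLpNorm_cutoff_smul_le R _
  · exact eLpNorm_le_mul_eLpNorm_of_ae_le_mul
      (.of_forall fun y => norm_smul_fderiv_cutoff_le hM R _ y) p

end Cutoff

section WeightedLp

variable {E : Type*} [NormedAddCommGroup E] {F : Type*} [NormedAddCommGroup F]
  [NormedSpace ℝ F]

theorem norm_gaussianWeight_smul_rpow (a : ℝ) {r : ℝ} (hr : r ≠ 0) (y : E) (v : F) :
    ‖gaussianWeight (a / r) y • v‖ ^ r = ‖v‖ ^ r * gaussianWeight a y := by
  rw [norm_gaussianWeight_smul, Real.mul_rpow (gaussianWeight_pos _ y).le (norm_nonneg v),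
    gaussianWeight_div_rpow a hr, mul_comm]

variable [MeasurableSpace E] {μ : Measure E}

theorem eLpNorm_gaussianWeight_smul_mono {b c : ℝ} (hbc : b ≤ c) (f : E → F) (p : ℝ≥0∞) :
    eLpNorm (fun y => gaussianWeight b y • f y) p μ ≤
      eLpNorm (fun y => gaussianWeight c y • f y) p μ := by
  refine eLpNorm_mono fun y => ?_
  rw [norm_gaussianWeight_smul, norm_gaussianWeight_smul]
  gcongr
  exact gaussianWeight_le_gaussianWeight hbc y

theorem eLpNorm_gaussianWeight_smul {a : ℝ} {r : ℝ≥0} (hr : r ≠ 0) {f : E → F}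
    (hWf : MemLp (fun y => gaussianWeight (a / r) y • f y) r μ) :
    eLpNorm (fun y => gaussianWeight (a / r) y • f y) r μ =
      ENNReal.ofReal ((∫ y, ‖f y‖ ^ (r : ℝ) * gaussianWeight a y ∂μ) ^ (r : ℝ)⁻¹) := by
  rw [hWf.eLpNorm_eq_integral_rpow_norm (by exact_mod_cast hr) ENNReal.coe_ne_top]
  simp only [ENNReal.coe_toReal, norm_gaussianWeight_smul_rpow a (NNReal.coe_ne_zero.2 hr)]

theorem eLpNorm_two_gaussianWeight_smul_le {a N : ℝ} {f : E → F}
    (hWf : MemLp (fun y => gaussianWeight (a / 2) y • f y) 2 μ)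
    (hN : ∫ y, ‖f y‖ ^ 2 * gaussianWeight a y ∂μ ≤ N) :
    eLpNorm (fun y => gaussianWeight (a / 2) y • f y) 2 μ ≤ ENNReal.ofReal √N := by
  have hnorm : eLpNorm (fun y => gaussianWeight (a / 2) y • f y) 2 μ =
      ENNReal.ofReal √(∫ y, ‖f y‖ ^ 2 * gaussianWeight a y ∂μ) := by
    simpa [Real.sqrt_eq_rpow] using eLpNorm_gaussianWeight_smul (r := 2) two_ne_zero hWf
  rw [hnorm]
  gcongr

variable [BorelSpace E]

theorem memLp_gaussianWeight_smul_iff (a : ℝ) {r : ℝ≥0} (hr : r ≠ 0) {f : E → F}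
    (hf : AEStronglyMeasurable f μ) :
    MemLp (fun y => gaussianWeight (a / r) y • f y) r μ ↔
      Integrable (fun y => ‖f y‖ ^ (r : ℝ) * gaussianWeight a y) μ := by
  have hWf : AEStronglyMeasurable (fun y => gaussianWeight (a / r) y • f y) μ :=
    (continuous_gaussianWeight _).aestronglyMeasurable.smul hf
  rw [← integrable_norm_rpow_iff hWf (by exact_mod_cast hr) ENNReal.coe_ne_top]
  simp only [ENNReal.coe_toReal, norm_gaussianWeight_smul_rpow a (NNReal.coe_ne_zero.2 hr)]

theorem memLp_two_gaussianWeight_smul_iff (a : ℝ) {f : E → F} (hf : AEStronglyMeasurable f μ) :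
    MemLp (fun y => gaussianWeight (a / 2) y • f y) 2 μ ↔
      Integrable (fun y => ‖f y‖ ^ 2 * gaussianWeight a y) μ := by
  simpa using memLp_gaussianWeight_smul_iff (r := 2) a two_ne_zero hf

end WeightedLp

theorem inv_two_mul_div_sub_two {d : ℝ} (hd : 2 < d) :
    (2 * d / (d - 2))⁻¹ = 2⁻¹ - d⁻¹ := by
  have hd0 : d ≠ 0 := by positivity
  have hd2 : d - 2 ≠ 0 := (sub_pos.2 hd).ne'
  field_simp

theorem norm_gradient {E : Type*} [NormedAddCommGroup E] [InnerProductSpace ℝ E]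
    [CompleteSpace E] (f : E → ℝ) (y : E) : ‖gradient f y‖ = ‖fderiv ℝ f y‖ := by
  simp [gradient]

section Embedding

variable {E : Type*} [NormedAddCommGroup E] [InnerProductSpace ℝ E] [FiniteDimensional ℝ E]
  [MeasurableSpace E] [BorelSpace E] {μ : Measure E} [μ.IsAddHaarMeasure]

theorem eLpNorm_gaussianWeight_mul_cutoff_le {M : ℝ}
    (hM : ∀ (R : ℝ) (y : E), ‖fderiv ℝ (cutoff R) y‖ ≤ |R|⁻¹ * M) {R : ℝ} (hR : R ≠ 0) {b : ℝ}
    (hb : 0 ≤ b) {q p : ℝ≥0} (hE : 0 < finrank ℝ E)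
    (hp : (p : ℝ)⁻¹ = 2⁻¹ - (finrank ℝ E : ℝ)⁻¹) (hq : q ∈ Icc 2 p)
    {f : E → ℝ} (hf : Differentiable ℝ f)
    (hWf : MemLp (fun y => gaussianWeight b y * f y) 2 μ)
    (hWf' : MemLp (fun y => gaussianWeight b y • fderiv ℝ f y) 2 μ) :
    eLpNorm (fun y => gaussianWeight b y * (cutoff R y * f y)) q μ ≤
      max (eLpNorm (fun y => gaussianWeight b y * f y) 2 μ)
        (eLpNormLESNormFDerivOfEqInnerConst μ 2 *
          (eLpNorm (fun y => gaussianWeight b y • fderiv ℝ f y) 2 μ +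
            ENNReal.ofReal (|R|⁻¹ * M) * eLpNorm (fun y => gaussianWeight b y * f y) 2 μ)) := by
  refine (eLpNorm_gaussianWeight_mul_le_of_hasCompactSupport hb hE hp hq
    (((contDiff_cutoff R).differentiable one_ne_zero).fun_mul hf)
    (hasCompactSupport_cutoff hR).mul_right (memLp_smul_fderiv_cutoff_mul R hf hWf hWf')).trans ?_
  gcongr
  · simpa only [smul_eq_mul, mul_left_comm] using
      eLpNorm_cutoff_smul_le R fun y => gaussianWeight b y * f y
  · exact eLpNorm_smul_fderiv_cutoff_mul_le hM R one_le_two hf hWf hWf'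

theorem eLpNorm_gaussianWeight_mul_le {b : ℝ} (hb : 0 ≤ b) {q p : ℝ≥0} (hE : 0 < finrank ℝ E)
    (hp : (p : ℝ)⁻¹ = 2⁻¹ - (finrank ℝ E : ℝ)⁻¹) (hq : q ∈ Icc 2 p)
    {f : E → ℝ} (hf : Differentiable ℝ f)
    (hWf : MemLp (fun y => gaussianWeight b y * f y) 2 μ)
    (hWf' : MemLp (fun y => gaussianWeight b y • fderiv ℝ f y) 2 μ) :
    eLpNorm (fun y => gaussianWeight b y * f y) q μ ≤
      max (eLpNorm (fun y => gaussianWeight b y * f y) 2 μ)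
        (eLpNormLESNormFDerivOfEqInnerConst μ 2 *
          eLpNorm (fun y => gaussianWeight b y • fderiv ℝ f y) 2 μ) := by
  obtain ⟨M, hM⟩ := exists_norm_fderiv_cutoff_le E
  let R (k : ℕ) : ℝ := k + 1
  have hR (k : ℕ) : R k ≠ 0 := by positivity
  have hRtop : Tendsto R atTop atTop :=
    tendsto_atTop_add_const_right _ 1 tendsto_natCast_atTop_atTop
  have herror : Tendsto (fun k => ENNReal.ofReal (|R k|⁻¹ * M) *
      eLpNorm (fun y => gaussianWeight b y * f y) 2 μ) atTop (𝓝 0) := by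
    have h : Tendsto (fun k => |R k|⁻¹ * M) atTop (𝓝 0) := by
      simpa using ((tendsto_abs_atTop_atTop.comp hRtop).inv_tendsto_atTop).mul_const M
    simpa using ENNReal.Tendsto.mul_const (ENNReal.tendsto_ofReal h) (.inr hWf.eLpNorm_ne_top)
  refine eLpNorm_le_of_tendsto (f := fun k y => gaussianWeight b y * (cutoff (R k) y * f y))
    (fun k => ?_) (.of_forall fun y => ?_) ?_
    fun k => eLpNorm_gaussianWeight_mul_cutoff_le hM (hR k) hb hE hp hq hf hWf hWf'
  · exact ((continuous_gaussianWeight b).mul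
      ((contDiff_cutoff (R k)).continuous.mul hf.continuous)).aestronglyMeasurable
  · simpa using (((tendsto_cutoff_atTop y).comp hRtop).mul_const (f y)).const_mul
      (gaussianWeight b y)
  · refine tendsto_const_nhds.max ?_
    simpa using ENNReal.Tendsto.const_mul (herror.const_add _) (.inr ENNReal.coe_ne_top)

theorem eLpNorm_gaussianWeight_div_mul_le {a : ℝ} (ha : 0 ≤ a) {q p : ℝ≥0} (hE : 0 < finrank ℝ E)
    (hp : (p : ℝ)⁻¹ = 2⁻¹ - (finrank ℝ E : ℝ)⁻¹) (hq : q ∈ Icc 2 p)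
    {f : E → ℝ} (hf : Differentiable ℝ f)
    (hf0 : Integrable (fun y => f y ^ 2 * gaussianWeight a y) μ)
    (hf1 : Integrable (fun y => ‖fderiv ℝ f y‖ ^ 2 * gaussianWeight a y) μ) :
    eLpNorm (fun y => gaussianWeight (a / q) y * f y) q μ ≤
      ENNReal.ofReal (max 1 (eLpNormLESNormFDerivOfEqInnerConst μ 2 : ℝ) *
        √(∫ y, (‖fderiv ℝ f y‖ ^ 2 + f y ^ 2) * gaussianWeight a y ∂μ)) := by
  set A : ℝ≥0 := eLpNormLESNormFDerivOfEqInnerConst μ 2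
  set N := ∫ y, (‖fderiv ℝ f y‖ ^ 2 + f y ^ 2) * gaussianWeight a y ∂μ
  have hN : Integrable (fun y => (‖fderiv ℝ f y‖ ^ 2 + f y ^ 2) * gaussianWeight a y) μ := by
    simpa only [add_mul] using hf1.fun_add hf0
  have hf0_le : ∫ y, f y ^ 2 * gaussianWeight a y ∂μ ≤ N := by
    refine integral_mono hf0 hN fun y => mul_le_mul_of_nonneg_right ?_ (gaussianWeight_pos a y).le
    exact le_add_of_nonneg_left (sq_nonneg _)
  have hf1_le : ∫ y, ‖fderiv ℝ f y‖ ^ 2 * gaussianWeight a y ∂μ ≤ N := by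
    refine integral_mono hf1 hN fun y => mul_le_mul_of_nonneg_right ?_ (gaussianWeight_pos a y).le
    exact le_add_of_nonneg_right (sq_nonneg _)
  have hWf : MemLp (fun y => gaussianWeight (a / 2) y * f y) 2 μ :=
    (memLp_two_gaussianWeight_smul_iff a hf.continuous.aestronglyMeasurable).2 (by simpa using hf0)
  have hWf' : MemLp (fun y => gaussianWeight (a / 2) y • fderiv ℝ f y) 2 μ :=
    (memLp_two_gaussianWeight_smul_iff a (measurable_fderiv ℝ f).aestronglyMeasurable).2 hf1
  have hWf_le : eLpNorm (fun y => gaussianWeight (a / 2) y * f y) 2 μ ≤ ENNReal.ofReal √N :=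
    eLpNorm_two_gaussianWeight_smul_le hWf (by simpa using hf0_le)
  have hWf'_le : eLpNorm (fun y => gaussianWeight (a / 2) y • fderiv ℝ f y) 2 μ ≤
      ENNReal.ofReal √N :=
    eLpNorm_two_gaussianWeight_smul_le (F := E →L[ℝ] ℝ) hWf' hf1_le
  calc eLpNorm (fun y => gaussianWeight (a / q) y * f y) q μ
      ≤ eLpNorm (fun y => gaussianWeight (a / 2) y * f y) q μ := by
        refine eLpNorm_gaussianWeight_smul_mono ?_ f q
        gcongr
        exact_mod_cast hq.1
    _ ≤ max (eLpNorm (fun y => gaussianWeight (a / 2) y * f y) 2 μ)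
          (A * eLpNorm (fun y => gaussianWeight (a / 2) y • fderiv ℝ f y) 2 μ) :=
        eLpNorm_gaussianWeight_mul_le (by positivity) hE hp hq hf hWf hWf'
    _ ≤ max (1 * ENNReal.ofReal √N) (A * ENNReal.ofReal √N) := by
        rw [one_mul]
        gcongr
    _ = ENNReal.ofReal (max 1 (A : ℝ) * √N) := by
        rw [ENNReal.ofReal_mul (by positivity), ENNReal.ofReal_max, ENNReal.ofReal_one,
          ENNReal.ofReal_coe_nnreal, max_mul]

variable (μ) in
theorem stmt1_general (hE : 2 < finrank ℝ E) {a : ℝ} (ha : 0 ≤ a) {q : ℝ} (hq2 : 2 ≤ q)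
    (hq : q ≤ 2 * (finrank ℝ E : ℝ) / ((finrank ℝ E : ℝ) - 2)) :
    ∃ C : ℝ, 0 < C ∧ ∀ f : E → ℝ, Differentiable ℝ f →
      Integrable (fun y => f y ^ 2 * gaussianWeight a y) μ →
      Integrable (fun y => ‖gradient f y‖ ^ 2 * gaussianWeight a y) μ →
      Integrable (fun y => |f y| ^ q * gaussianWeight a y) μ ∧
      (∫ y, |f y| ^ q * gaussianWeight a y ∂μ) ^ (1 / q) ≤
        C * √(∫ y, (‖gradient f y‖ ^ 2 + f y ^ 2) * gaussianWeight a y ∂μ) := by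
  refine ⟨max 1 (eLpNormLESNormFDerivOfEqInnerConst μ 2 : ℝ), by positivity,
    fun f hf hf0 hf1 => ?_⟩
  simp only [norm_gradient] at hf1 ⊢
  have hd : 2 < (finrank ℝ E : ℝ) := by exact_mod_cast hE
  lift q to ℝ≥0 using by linarith
  have hq0 : q ≠ 0 := by rintro rfl; norm_num at hq2
  have hbound := eLpNorm_gaussianWeight_div_mul_le ha (by omega)
    (p := ⟨_, (by linarith : (0 : ℝ) ≤ q).trans hq⟩) (inv_two_mul_div_sub_two hd)
    ⟨by exact_mod_cast hq2, hq⟩ hf hf0 hf1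
  have hWf : MemLp (fun y => gaussianWeight (a / q) y • f y) q μ :=
    ⟨((continuous_gaussianWeight _).mul hf.continuous).aestronglyMeasurable,
      hbound.trans_lt ENNReal.ofReal_lt_top⟩
  refine ⟨(memLp_gaussianWeight_smul_iff a hq0 hf.continuous.aestronglyMeasurable).1 hWf, ?_⟩
  rw [one_div, ← ENNReal.ofReal_le_ofReal_iff (by positivity)]
  exact (eLpNorm_gaussianWeight_smul hq0 hWf).symm.trans_le hbound

end Embedding

theorem Kw_eq_gaussianWeight {n : ℕ} :
    (Kw : EuclideanSpace ℝ (Fin n) → ℝ) = gaussianWeight 4⁻¹ := by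
  ext y
  rw [Kw, gaussianWeight, div_eq_inv_mul]

/-- weighted Sobolev embedding `H¹(K) ↪ L^q(K)`:
for `n ≥ 3` and `2 ≤ q ≤ 2n/(n−2)` there is `C = C(n,q) > 0` such that every
`f ∈ H¹(K)` lies in `L^q(K)` with `‖f‖_{L^q(K)} ≤ C ‖f‖_{H¹(K)}`. -/
theorem stmt1 (n : ℕ) (hn : 3 ≤ n) (q : ℝ) (hq2 : 2 ≤ q)
    (hq : q ≤ 2 * (n : ℝ) / ((n : ℝ) - 2)) :
    ∃ C : ℝ, 0 < C ∧ ∀ f : EuclideanSpace ℝ (Fin n) → ℝ, MemH1K f →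
      Integrable (fun y => |f y| ^ q * Kw y) ∧
      (∫ y, |f y| ^ q * Kw y) ^ (1 / q) ≤
        C * Real.sqrt (∫ y, (‖gradient f y‖ ^ 2 + (f y) ^ 2) * Kw y) := by
  simpa only [MemH1K, and_imp, Kw_eq_gaussianWeight] using stmt1_general
    (volume : Measure (EuclideanSpace ℝ (Fin n))) (by simpa using Nat.lt_of_succ_le hn)
    (a := 4⁻¹) (by norm_num) hq2 (by simpa using hq)

end
end

section
/- Let n ≥ 3. For every u ∈ H^1(K) one has the weighted Poincaré inequality (n/2) ∫_{ℝⁿ} |u(y)|² K(y) dy ≤ ∫_{ℝⁿ} |∇u(y)|² K(y) dy. -/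
open MeasureTheory

noncomputable section

/-!
For a vector `v` put `l = ⟪v, y⟫`. Integrating the `v`-derivative of `u² l e^{a|y|²}` and completing
the square `(∂ᵥu + 2a l u)² ≥ 0` gives the one-directional inequality
`2a‖v‖² ∫ u² e^{a|y|²} ≤ ∫ (∂ᵥu)² e^{a|y|²}`, and summing over an orthonormal basis produces the
dimension. The integration by parts needs `u² |y|² e^{a|y|²}` to be integrable, which is automatic
for `a < b` when `u² e^{b|y|²}` is integrable; the rate `b` itself is reached by letting `a ↑ b`.
-/

open Filter Module Set
open scoped RealInnerProductSpace Topology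

section GaussianWeight

variable {E : Type*} [SeminormedAddCommGroup E]

/-- The Gaussian weight `e^{a|y|²}` of an arbitrary real rate `a`. The weight `Kw` has rate `1/4`;
the nearby rates are needed to approximate it. -/
def gaussWeight (a : ℝ) (y : E) : ℝ := Real.exp (a * ‖y‖ ^ 2)

lemma Kw_eq_gaussWeight {n : ℕ} (y : EuclideanSpace ℝ (Fin n)) :
    Kw y = gaussWeight (1 / 4) y := by
  rw [Kw, gaussWeight, one_div_mul_eq_div]

lemma gaussWeight_pos (a : ℝ) (y : E) : 0 < gaussWeight a y :=
  Real.exp_pos _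

lemma gaussWeight_add (a b : ℝ) (y : E) :
    gaussWeight (a + b) y = gaussWeight a y * gaussWeight b y := by
  simp only [gaussWeight, add_mul, Real.exp_add]

lemma gaussWeight_mono (y : E) : Monotone fun a ↦ gaussWeight a y :=
  fun _ _ hab ↦ Real.exp_le_exp.2 (mul_le_mul_of_nonneg_right hab (sq_nonneg _))

lemma gaussWeight_le_one {a : ℝ} (ha : a ≤ 0) (y : E) : gaussWeight a y ≤ 1 :=
  Real.exp_le_one_iff.2 (mul_nonpos_of_nonpos_of_nonneg ha (sq_nonneg _))

lemma continuous_gaussWeight (a : ℝ) : Continuous (gaussWeight a : E → ℝ) := by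
  unfold gaussWeight; fun_prop

lemma continuous_gaussWeight_rate (y : E) : Continuous fun a ↦ gaussWeight a y := by
  unfold gaussWeight; fun_prop

lemma norm_sq_mul_gaussWeight_neg_le {c : ℝ} (hc : 0 < c) (y : E) :
    ‖y‖ ^ 2 * gaussWeight (-c) y ≤ c⁻¹ := by
  have hexp : c * ‖y‖ ^ 2 ≤ Real.exp (c * ‖y‖ ^ 2) := by
    linarith [Real.add_one_le_exp (c * ‖y‖ ^ 2)]
  rw [gaussWeight, neg_mul, Real.exp_neg, ← div_eq_mul_inv, div_le_iff₀ (Real.exp_pos _),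
    inv_mul_eq_div, le_div_iff₀' hc]
  exact hexp

section Integral

variable [MeasurableSpace E] [OpensMeasurableSpace E] {μ : Measure E} {g : E → ℝ} {a b : ℝ}

lemma integrable_mul_gaussWeight_of_le (hab : a ≤ b)
    (hg : Integrable (fun y ↦ g y * gaussWeight b y) μ) :
    Integrable (fun y ↦ g y * gaussWeight a y) μ := by
  have hbound (y : E) : ‖gaussWeight (a - b) y‖ ≤ 1 := by
    rw [Real.norm_of_nonneg (gaussWeight_pos _ y).le]
    exact gaussWeight_le_one (sub_nonpos.2 hab) y
  refine (hg.mul_bdd (continuous_gaussWeight (a - b)).aestronglyMeasurable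
    (.of_forall hbound)).congr (.of_forall fun y ↦ ?_)
  simp only [mul_assoc, ← gaussWeight_add, add_sub_cancel]

lemma integrable_mul_norm_sq_mul_gaussWeight_of_lt (hab : a < b)
    (hg : Integrable (fun y ↦ g y * gaussWeight b y) μ) :
    Integrable (fun y ↦ g y * ‖y‖ ^ 2 * gaussWeight a y) μ := by
  have hbound (y : E) : ‖‖y‖ ^ 2 * gaussWeight (-(b - a)) y‖ ≤ (b - a)⁻¹ := by
    rw [Real.norm_of_nonneg (mul_nonneg (sq_nonneg _) (gaussWeight_pos _ y).le)]
    exact norm_sq_mul_gaussWeight_neg_le (sub_pos.2 hab) y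
  have hcont : Continuous fun y : E ↦ ‖y‖ ^ 2 * gaussWeight (-(b - a)) y :=
    (continuous_norm.pow 2).mul (continuous_gaussWeight _)
  refine (hg.mul_bdd hcont.aestronglyMeasurable (.of_forall hbound)).congr
    (.of_forall fun y ↦ ?_)
  have hsplit : gaussWeight a y = gaussWeight b y * gaussWeight (-(b - a)) y := by
    rw [← gaussWeight_add, neg_sub, add_sub_cancel]
  simp only [hsplit]
  ring

lemma continuousWithinAt_integral_mul_gaussWeight
    (hg : Integrable (fun y ↦ g y * gaussWeight b y) μ) :
    ContinuousWithinAt (fun a ↦ ∫ y, g y * gaussWeight a y ∂μ) (Iic b) b := by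
  refine continuousWithinAt_of_dominated ?_ ?_ hg.norm ?_
  · filter_upwards [self_mem_nhdsWithin] with a ha
    exact (integrable_mul_gaussWeight_of_le ha hg).aestronglyMeasurable
  · filter_upwards [self_mem_nhdsWithin] with a ha
    refine .of_forall fun y ↦ ?_
    rw [norm_mul, norm_mul, Real.norm_of_nonneg (gaussWeight_pos a y).le,
      Real.norm_of_nonneg (gaussWeight_pos b y).le]
    exact mul_le_mul_of_nonneg_left (gaussWeight_mono y ha) (norm_nonneg _)
  · exact .of_forall fun y ↦
      ((continuous_gaussWeight_rate y).const_mul (g y)).continuousWithinAt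

end Integral

end GaussianWeight

lemma integrable_mul_mul_of_sq_mul {α : Type*} [MeasurableSpace α] {μ : Measure α}
    {f g w : α → ℝ} (hf : AEStronglyMeasurable f μ) (hg : AEStronglyMeasurable g μ)
    (hw : AEStronglyMeasurable w μ) (hw_nonneg : ∀ x, 0 ≤ w x)
    (hfw : Integrable (fun x ↦ f x ^ 2 * w x) μ) (hgw : Integrable (fun x ↦ g x ^ 2 * w x) μ) :
    Integrable (fun x ↦ f x * g x * w x) μ := by
  refine (hfw.add hgw).mono' ((hf.mul hg).mul hw) (.of_forall fun x ↦ ?_)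
  have hyoung : |f x * g x| ≤ f x ^ 2 + g x ^ 2 := by
    rw [abs_mul, ← sq_abs (f x), ← sq_abs (g x)]
    linarith [two_mul_le_add_sq |f x| |g x|, mul_nonneg (abs_nonneg (f x)) (abs_nonneg (g x))]
  rw [norm_mul, Real.norm_of_nonneg (hw_nonneg x), Real.norm_eq_abs, Pi.add_apply, ← add_mul]
  exact mul_le_mul_of_nonneg_right hyoung (hw_nonneg x)

lemma integral_eq_zero_of_hasLineDerivAt {E F : Type*} [NormedAddCommGroup E] [NormedSpace ℝ E]
    [FiniteDimensional ℝ E] [MeasurableSpace E] [BorelSpace E] [NormedAddCommGroup F]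
    [NormedSpace ℝ F] {μ : Measure E} [μ.IsAddHaarMeasure] {f f' : E → F} {v : E}
    (hf : Integrable f μ) (hf' : Integrable f' μ) (h : ∀ x, HasLineDerivAt ℝ f (f' x) x v) :
    ∫ x, f' x ∂μ = 0 := by
  have hconst (x : E) : HasLineDerivAt ℝ (fun _ : E ↦ (1 : ℝ)) 0 x v :=
    hasDerivAt_const (0 : ℝ) (1 : ℝ)
  simpa using integral_bilinear_hasLineDerivAt_right_eq_neg_left_of_integrable
    (B := ContinuousLinearMap.lsmul ℝ ℝ) (f := fun _ ↦ (1 : ℝ)) (f' := fun _ ↦ 0)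
    (by simp) (by simpa using hf') (by simpa using hf) (fun x _ ↦ hconst x) (fun x _ ↦ h x)

section Poincare

variable {E : Type*} [NormedAddCommGroup E] [InnerProductSpace ℝ E]

lemma hasLineDerivAt_gaussWeight (a : ℝ) (x v : E) :
    HasLineDerivAt ℝ (gaussWeight a) (2 * a * ⟪v, x⟫ * gaussWeight a x) x v := by
  have hexp := ((hasStrictFDerivAt_norm_sq x).hasFDerivAt.const_mul a).exp.hasLineDerivAt v
  convert! hexp using 1
  simp only [gaussWeight, smul_apply, innerSL_apply_apply, nsmul_eq_mul, smul_eq_mul,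
    Nat.cast_ofNat, real_inner_comm]
  ring

lemma hasLineDerivAt_sq_mul_inner_mul_gaussWeight {u : E → ℝ} {u' : ℝ} {x v : E} (a : ℝ)
    (hu : HasLineDerivAt ℝ u u' x v) :
    HasLineDerivAt ℝ (fun y ↦ u y * (u y * ⟪v, y⟫) * gaussWeight a y)
      ((2 * (u' * (u x * ⟪v, x⟫)) + ‖v‖ ^ 2 * u x ^ 2 + 2 * a * (u x * ⟪v, x⟫) ^ 2)
        * gaussWeight a x) x v := by
  have hinner : HasLineDerivAt ℝ (fun y ↦ ⟪v, y⟫) (‖v‖ ^ 2) x v := by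
    simpa using (innerSL ℝ v).hasFDerivAt.hasLineDerivAt (x := x) v
  refine (HasDerivAt.mul (HasDerivAt.mul hu (HasDerivAt.mul hu hinner))
    (hasLineDerivAt_gaussWeight a x v)).congr_deriv ?_
  simp only [zero_smul, add_zero, Pi.mul_apply]
  ring

lemma integrable_sq_mul_inner_mul_gaussWeight_of_lt [MeasurableSpace E] [OpensMeasurableSpace E]
    {μ : Measure E} {u : E → ℝ} {a b : ℝ} (hab : a < b) (v : E) (hu : Continuous u)
    (hub : Integrable (fun y ↦ u y ^ 2 * gaussWeight b y) μ) :
    Integrable (fun y ↦ (u y * ⟪v, y⟫) ^ 2 * gaussWeight a y) μ := by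
  have hcont : Continuous fun y ↦ (u y * ⟪v, y⟫) ^ 2 * gaussWeight a y :=
    ((hu.mul (by fun_prop)).pow 2).mul (continuous_gaussWeight a)
  refine ((integrable_mul_norm_sq_mul_gaussWeight_of_lt hab hub).const_mul (‖v‖ ^ 2)).mono'
    hcont.aestronglyMeasurable (.of_forall fun y ↦ ?_)
  have hcs : ⟪v, y⟫ ^ 2 ≤ ‖v‖ ^ 2 * ‖y‖ ^ 2 := by
    rw [← mul_pow, ← sq_abs]
    exact pow_le_pow_left₀ (abs_nonneg _) (abs_real_inner_le_norm v y) 2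
  rw [Real.norm_of_nonneg (mul_nonneg (sq_nonneg _) (gaussWeight_pos a y).le)]
  calc (u y * ⟪v, y⟫) ^ 2 * gaussWeight a y
      = ⟪v, y⟫ ^ 2 * (u y ^ 2 * gaussWeight a y) := by ring
    _ ≤ ‖v‖ ^ 2 * ‖y‖ ^ 2 * (u y ^ 2 * gaussWeight a y) :=
        mul_le_mul_of_nonneg_right hcs (mul_nonneg (sq_nonneg _) (gaussWeight_pos a y).le)
    _ = ‖v‖ ^ 2 * (u y ^ 2 * ‖y‖ ^ 2 * gaussWeight a y) := by ring

lemma sum_lineDeriv_sq_eq_norm_gradient_sq [CompleteSpace E] {ι : Type*} [Fintype ι]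
    (e : OrthonormalBasis ι ℝ E) {u : E → ℝ} {x : E} (hu : DifferentiableAt ℝ u x) :
    ∑ i, lineDeriv ℝ u x (e i) ^ 2 = ‖gradient u x‖ ^ 2 := by
  simp only [← e.sum_sq_inner_left (gradient u x), inner_gradient_left, hu.lineDeriv_eq_fderiv]

lemma integrable_lineDeriv_sq_mul_gaussWeight [CompleteSpace E] [MeasurableSpace E]
    [OpensMeasurableSpace E] {μ : Measure E} {u : E → ℝ} {b : ℝ} (hu : Differentiable ℝ u)
    (v : E) (hgrad : Integrable (fun y ↦ ‖gradient u y‖ ^ 2 * gaussWeight b y) μ) :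
    Integrable (fun y ↦ lineDeriv ℝ u y v ^ 2 * gaussWeight b y) μ := by
  have hmeas : Measurable fun y ↦ lineDeriv ℝ u y v ^ 2 * gaussWeight b y :=
    ((measurable_lineDeriv hu.continuous).pow_const 2).mul (continuous_gaussWeight b).measurable
  refine (hgrad.const_mul (‖v‖ ^ 2)).mono' hmeas.aestronglyMeasurable (.of_forall fun y ↦ ?_)
  have hcs : lineDeriv ℝ u y v ^ 2 ≤ ‖v‖ ^ 2 * ‖gradient u y‖ ^ 2 := by
    rw [(hu y).lineDeriv_eq_fderiv, ← inner_gradient_left, real_inner_comm, ← mul_pow, ← sq_abs]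
    exact pow_le_pow_left₀ (abs_nonneg _) (abs_real_inner_le_norm _ _) 2
  rw [Real.norm_of_nonneg (mul_nonneg (sq_nonneg _) (gaussWeight_pos b y).le), ← mul_assoc]
  exact mul_le_mul_of_nonneg_right hcs (gaussWeight_pos b y).le

variable [FiniteDimensional ℝ E] [MeasurableSpace E] [BorelSpace E] {μ : Measure E}
  [μ.IsAddHaarMeasure] {u : E → ℝ} {v : E} {a b : ℝ}

lemma mul_integral_sq_mul_gaussWeight_le_integral_lineDeriv_sq_of_lt (hab : a < b)
    (hu : Continuous u) (hdiff : ∀ x, LineDifferentiableAt ℝ u x v)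
    (hub : Integrable (fun y ↦ u y ^ 2 * gaussWeight b y) μ)
    (hDa : Integrable (fun y ↦ lineDeriv ℝ u y v ^ 2 * gaussWeight a y) μ) :
    2 * a * ‖v‖ ^ 2 * ∫ y, u y ^ 2 * gaussWeight a y ∂μ
      ≤ ∫ y, lineDeriv ℝ u y v ^ 2 * gaussWeight a y ∂μ := by
  let D (y : E) : ℝ := lineDeriv ℝ u y v
  let l (y : E) : ℝ := ⟪v, y⟫
  let G : E → ℝ := gaussWeight a
  let div (y : E) : ℝ :=
    (2 * (D y * (u y * l y)) + ‖v‖ ^ 2 * u y ^ 2 + 2 * a * (u y * l y) ^ 2) * G y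
  have hG (y : E) : 0 ≤ G y := (gaussWeight_pos a y).le
  have hGm : AEStronglyMeasurable G μ := (continuous_gaussWeight a).aestronglyMeasurable
  have hum : AEStronglyMeasurable u μ := hu.aestronglyMeasurable
  have hulm : AEStronglyMeasurable (fun y ↦ u y * l y) μ :=
    (hu.mul (by fun_prop)).aestronglyMeasurable
  have hDm : AEStronglyMeasurable D μ := (measurable_lineDeriv hu).aestronglyMeasurable
  have hua : Integrable (fun y ↦ u y ^ 2 * G y) μ := integrable_mul_gaussWeight_of_le hab.le hub
  have hul : Integrable (fun y ↦ (u y * l y) ^ 2 * G y) μ :=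
    integrable_sq_mul_inner_mul_gaussWeight_of_lt hab v hu hub
  have hdiv : Integrable div μ := by
    have hDul := integrable_mul_mul_of_sq_mul hDm hulm hGm hG hDa hul
    refine (((hDul.const_mul 2).add (hua.const_mul (‖v‖ ^ 2))).add
      (hul.const_mul (2 * a))).congr (.of_forall fun y ↦ ?_)
    simp only [div, Pi.add_apply]
    ring
  have hdiv_zero : ∫ y, div y ∂μ = 0 :=
    integral_eq_zero_of_hasLineDerivAt (integrable_mul_mul_of_sq_mul hum hulm hGm hG hua hul) hdiv
      fun x ↦ hasLineDerivAt_sq_mul_inner_mul_gaussWeight a (hdiff x).hasLineDerivAt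
  have hsquare (y : E) : 2 * a * ‖v‖ ^ 2 * (u y ^ 2 * G y) ≤ D y ^ 2 * G y + 2 * a * div y := by
    have hnonneg := mul_nonneg (sq_nonneg (D y + 2 * a * (u y * l y))) (hG y)
    simp only [div]
    linarith
  calc 2 * a * ‖v‖ ^ 2 * ∫ y, u y ^ 2 * G y ∂μ
      = ∫ y, 2 * a * ‖v‖ ^ 2 * (u y ^ 2 * G y) ∂μ := (integral_const_mul _ _).symm
    _ ≤ ∫ y, (D y ^ 2 * G y + 2 * a * div y) ∂μ :=
        integral_mono (hua.const_mul _) (hDa.add (hdiv.const_mul _)) hsquare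
    _ = ∫ y, D y ^ 2 * G y ∂μ := by
        rw [integral_add hDa (hdiv.const_mul _), integral_const_mul, hdiv_zero, mul_zero, add_zero]

theorem mul_integral_sq_mul_gaussWeight_le_integral_lineDeriv_sq (hu : Continuous u)
    (hdiff : ∀ x, LineDifferentiableAt ℝ u x v)
    (hub : Integrable (fun y ↦ u y ^ 2 * gaussWeight b y) μ)
    (hDb : Integrable (fun y ↦ lineDeriv ℝ u y v ^ 2 * gaussWeight b y) μ) :
    2 * b * ‖v‖ ^ 2 * ∫ y, u y ^ 2 * gaussWeight b y ∂μ
      ≤ ∫ y, lineDeriv ℝ u y v ^ 2 * gaussWeight b y ∂μ := by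
  have hleft : Tendsto (fun a ↦ 2 * a * ‖v‖ ^ 2 * ∫ y, u y ^ 2 * gaussWeight a y ∂μ) (𝓝[<] b)
      (𝓝 (2 * b * ‖v‖ ^ 2 * ∫ y, u y ^ 2 * gaussWeight b y ∂μ)) :=
    (Continuous.continuousWithinAt (by fun_prop)).mul
      ((continuousWithinAt_integral_mul_gaussWeight hub).mono Iio_subset_Iic_self)
  have hright : Tendsto (fun a ↦ ∫ y, lineDeriv ℝ u y v ^ 2 * gaussWeight a y ∂μ) (𝓝[<] b)
      (𝓝 (∫ y, lineDeriv ℝ u y v ^ 2 * gaussWeight b y ∂μ)) :=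
    (continuousWithinAt_integral_mul_gaussWeight hDb).mono Iio_subset_Iic_self
  refine le_of_tendsto_of_tendsto hleft hright ?_
  filter_upwards [self_mem_nhdsWithin] with a (hab : a < b)
  exact mul_integral_sq_mul_gaussWeight_le_integral_lineDeriv_sq_of_lt hab hu hdiff hub
    (integrable_mul_gaussWeight_of_le hab.le hDb)

theorem stmt2_general (hu : Differentiable ℝ u)
    (hub : Integrable (fun y ↦ u y ^ 2 * gaussWeight b y) μ)
    (hgrad : Integrable (fun y ↦ ‖gradient u y‖ ^ 2 * gaussWeight b y) μ) :
    2 * b * finrank ℝ E * ∫ y, u y ^ 2 * gaussWeight b y ∂μ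
      ≤ ∫ y, ‖gradient u y‖ ^ 2 * gaussWeight b y ∂μ := by
  let e := stdOrthonormalBasis ℝ E
  have hD (i) : Integrable (fun y ↦ lineDeriv ℝ u y (e i) ^ 2 * gaussWeight b y) μ :=
    integrable_lineDeriv_sq_mul_gaussWeight hu (e i) hgrad
  calc 2 * b * finrank ℝ E * ∫ y, u y ^ 2 * gaussWeight b y ∂μ
      = ∑ i, 2 * b * ‖e i‖ ^ 2 * ∫ y, u y ^ 2 * gaussWeight b y ∂μ := by
        simp only [e.norm_eq_one, one_pow, mul_one, Finset.sum_const, Finset.card_univ,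
          Fintype.card_fin, nsmul_eq_mul]
        ring
    _ ≤ ∑ i, ∫ y, lineDeriv ℝ u y (e i) ^ 2 * gaussWeight b y ∂μ :=
        Finset.sum_le_sum fun i _ ↦
          mul_integral_sq_mul_gaussWeight_le_integral_lineDeriv_sq hu.continuous
            (fun x ↦ (hu x).lineDifferentiableAt) hub (hD i)
    _ = ∫ y, ‖gradient u y‖ ^ 2 * gaussWeight b y ∂μ := by
        rw [← integral_finsetSum _ fun i _ ↦ hD i]
        simp only [← Finset.sum_mul, sum_lineDeriv_sq_eq_norm_gradient_sq e (hu _)]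

end Poincare

/-- weighted Poincaré inequality: for `n ≥ 3` and every
`u ∈ H¹(K)`, `(n/2) ∫ |u|² K dy ≤ ∫ |∇u|² K dy`. -/
theorem stmt2 (n : ℕ) (hn : 3 ≤ n) (u : EuclideanSpace ℝ (Fin n) → ℝ)
    (hu : MemH1K u) :
    ((n : ℝ) / 2) * ∫ y, (u y) ^ 2 * Kw y ≤ ∫ y, ‖gradient u y‖ ^ 2 * Kw y := by
  obtain ⟨hdiff, hub, hgrad⟩ := hu
  simp only [Kw_eq_gaussWeight] at hub hgrad ⊢
  convert stmt2_general hdiff hub hgrad using 2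
  rw [finrank_euclideanSpace_fin]
  ring

end
end
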